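/- arXiv:2304.14279 — 2 statements merged into one kernel-verified Lean document; each statement's English description precedes it below -/
import Mathlib

section
/- Let a, b ∈ ℝ and set m := |a| + |a+b|. Let L be a nonnegative real random variable with P(L > v) = e^{b²/2}·e^{−(m+v)²/2} for all v > 0. Then for every θ > 0 one has both E[e^{θL}] ≤ 1 + θ·√(2π)·e^{θ²/2}·e^{b²/2 − mθ} and E[e^{θL}] ≤ 1 + θ·√(2π)·e^{θ²/2}. -/
/-!
By the layer-cake formula, `E[e^{θL}] = 1 + ∫_{v > 0} P(L > v) θ e^{θv} dv`. If
`P(L > v) ≤ e^{c - (m+v)²/2}`, completing the square gives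
`c - (m+v)²/2 + θv = θ²/2 + (c - mθ) - (v + (m-θ))²/2`, and enlarging the domain from `v > 0` to all
of `ℝ` leaves a full Gaussian integral `√(2π)`. This is `lintegral_exp_le_of_gaussian_tail`. The
first bound is the case `c = b²/2`, `m = |a| + |a+b|`; the second is the case `c = m = 0`, available
because `|b| ≤ |a| + |a+b|` forces `P(L > v) ≤ e^{-v²/2}`.
-/

open MeasureTheory

lemma lintegral_gaussian_shift (k : ℝ) :
    ∫⁻ v : ℝ, ENNReal.ofReal (Real.exp (-(v + k) ^ 2 / 2))
      = ENNReal.ofReal (Real.sqrt (2 * Real.pi)) := by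
  have h : ∀ v : ℝ, Real.exp (-v ^ 2 / 2) = Real.exp (-(1 / 2) * v ^ 2) := fun v => by
    congr 1; ring
  rw [lintegral_add_right_eq_self (fun v : ℝ => ENNReal.ofReal (Real.exp (-v ^ 2 / 2))) k]
  simp_rw [h]
  rw [← ofReal_integral_eq_lintegral_ofReal (integrable_exp_neg_mul_sq (by norm_num))
    (Filter.Eventually.of_forall fun v => (Real.exp_pos _).le), integral_gaussian]
  congr 2
  ring

/-- A Gaussian tail bound for a nonnegative variable, turned into an exponential moment bound. -/
lemma lintegral_exp_le_of_gaussian_tail {Ω : Type*} [MeasurableSpace Ω] (P : Measure Ω)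
    [IsProbabilityMeasure P] (L : Ω → ℝ) (hLm : Measurable L) (hL0 : ∀ ω, 0 ≤ L ω) (c m : ℝ)
    (htail : ∀ v : ℝ, 0 < v →
      P {ω | v < L ω} ≤ ENNReal.ofReal (Real.exp (c - (m + v) ^ 2 / 2)))
    (θ : ℝ) (hθ : 0 < θ) :
    ∫⁻ ω, ENNReal.ofReal (Real.exp (θ * L ω)) ∂P
      ≤ ENNReal.ofReal (1 + θ * Real.sqrt (2 * Real.pi) * Real.exp (θ ^ 2 / 2) *
          Real.exp (c - m * θ)) := by
  have hcont : Continuous fun t : ℝ => θ * Real.exp (θ * t) := by fun_prop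
  have hprim : ∀ x : ℝ, ∫ t in (0 : ℝ)..x, θ * Real.exp (θ * t) = Real.exp (θ * x) - 1 := by
    intro x
    have hd : ∀ t ∈ Set.uIcc 0 x,
        HasDerivAt (fun t : ℝ => Real.exp (θ * t)) (θ * Real.exp (θ * t)) t := by
      intro t _
      have := ((hasDerivAt_id t).const_mul θ).exp
      simpa [mul_comm] using this
    rw [intervalIntegral.integral_eq_sub_of_hasDerivAt hd (hcont.intervalIntegrable _ _)]
    simp
  have hlayer := lintegral_comp_eq_lintegral_meas_lt_mul P
    (f := L) (g := fun t => θ * Real.exp (θ * t))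
    (Filter.Eventually.of_forall hL0) hLm.aemeasurable
    (fun t _ => hcont.intervalIntegrable _ _)
    (Filter.Eventually.of_forall fun t => by positivity)
  simp_rw [hprim] at hlayer
  have hsplit : ∀ ω, ENNReal.ofReal (Real.exp (θ * L ω))
      = 1 + ENNReal.ofReal (Real.exp (θ * L ω) - 1) := by
    intro ω
    have h1 : 1 ≤ Real.exp (θ * L ω) := Real.one_le_exp (mul_nonneg hθ.le (hL0 ω))
    rw [← ENNReal.ofReal_one, ← ENNReal.ofReal_add zero_le_one (by linarith)]
    congr 1; ring
  simp_rw [hsplit]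
  rw [lintegral_add_left measurable_const, hlayer, lintegral_const, measure_univ, one_mul,
    ENNReal.ofReal_add zero_le_one (by positivity), ENNReal.ofReal_one]
  gcongr
  set K : ℝ := θ * Real.exp (θ ^ 2 / 2) * Real.exp (c - m * θ) with hK
  have hK0 : 0 ≤ K := by positivity
  calc ∫⁻ t in Set.Ioi 0, P {ω | t < L ω} * ENNReal.ofReal (θ * Real.exp (θ * t))
      ≤ ∫⁻ t in Set.Ioi 0,
          ENNReal.ofReal K * ENNReal.ofReal (Real.exp (-(t + (m - θ)) ^ 2 / 2)) := by
        refine setLIntegral_mono' measurableSet_Ioi fun t ht => ?_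
        refine (mul_le_mul_left (htail t ht) _).trans_eq ?_
        rw [← ENNReal.ofReal_mul (Real.exp_pos _).le, ← ENNReal.ofReal_mul hK0, hK]
        congr 1
        rw [mul_left_comm, ← Real.exp_add, mul_assoc θ, mul_assoc θ, ← Real.exp_add,
          ← Real.exp_add]
        congr 2
        ring
    _ ≤ ∫⁻ t, ENNReal.ofReal K * ENNReal.ofReal (Real.exp (-(t + (m - θ)) ^ 2 / 2)) :=
        setLIntegral_le_lintegral _ _
    _ = ENNReal.ofReal K * ENNReal.ofReal (Real.sqrt (2 * Real.pi)) := by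
        rw [lintegral_const_mul' _ _ ENNReal.ofReal_ne_top, lintegral_gaussian_shift]
    _ = _ := by
        rw [← ENNReal.ofReal_mul hK0, hK]
        congr 1; ring

/-- Exponential moment bounds from Pitman's tail formula: if `L ≥ 0` has
`P(L > v) = e^{b²/2} e^{-(m+v)²/2}` for all `v > 0`, where `m = |a| + |a+b|`, then for every
`θ > 0` both `E[e^{θL}] ≤ 1 + θ√(2π) e^{θ²/2} e^{b²/2 - mθ}` and
`E[e^{θL}] ≤ 1 + θ√(2π) e^{θ²/2}`. -/
theorem stmt1 {Ω : Type*} [MeasurableSpace Ω] (P : Measure Ω) [IsProbabilityMeasure P]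
    (a b : ℝ) (L : Ω → ℝ) (hLm : Measurable L) (hL0 : ∀ ω, 0 ≤ L ω)
    (htail : ∀ v : ℝ, 0 < v →
      P {ω | v < L ω}
        = ENNReal.ofReal
            (Real.exp (b ^ 2 / 2) * Real.exp (-((|a| + |a + b| + v) ^ 2) / 2)))
    (θ : ℝ) (hθ : 0 < θ) :
    (∫⁻ ω, ENNReal.ofReal (Real.exp (θ * L ω)) ∂P
        ≤ ENNReal.ofReal (1 + θ * Real.sqrt (2 * Real.pi) * Real.exp (θ ^ 2 / 2) *
            Real.exp (b ^ 2 / 2 - (|a| + |a + b|) * θ))) ∧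
    (∫⁻ ω, ENNReal.ofReal (Real.exp (θ * L ω)) ∂P
        ≤ ENNReal.ofReal (1 + θ * Real.sqrt (2 * Real.pi) * Real.exp (θ ^ 2 / 2))) := by
  constructor
  · refine lintegral_exp_le_of_gaussian_tail P L hLm hL0 _ _ (fun v hv => ?_) θ hθ
    rw [htail v hv, ← Real.exp_add]
    exact le_of_eq (by congr 2; ring)
  · have h := lintegral_exp_le_of_gaussian_tail P L hLm hL0 0 0 (fun v hv => ?_) θ hθ
    · simpa using h
    · rw [htail v hv, ← Real.exp_add]
      apply ENNReal.ofReal_le_ofReal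
      apply Real.exp_le_exp.mpr
      have hb : |b| ≤ |a| + |a + b| := by
        have := abs_sub (a + b) a
        rw [add_sub_cancel_left] at this
        linarith
      -- `b² + v² ≤ m² + v² ≤ (m + v)²` for `m = |a| + |a + b| ≥ 0`
      nlinarith [abs_nonneg b, sq_abs b, mul_nonneg ((abs_nonneg b).trans hb) hv.le]
end

section
/- Fix r₁, r₂ ∈ ℝ with r₂ > r₁ + 1, and let (t_N, x_N, y_N), N ∈ ℕ, be a sequence converging to (t, x, y) ∈ (0,∞) × ℝ². For u, v ∈ ℝ write z₁ := r₁ + iu and z₂ := r₂ + iv, and define f_N(u,v) := [ (z₂ − z₁) / ( (z₂ − z₁ − 1) − N^{−1/4}(z₁ + z₂) − N^{−1/2} z₁ z₂ ) ] · [ 1 / ( (1 + N^{−1/4} z₁)(1 + N^{−1/4} z₂) ) ] · exp( (t_N/2)(z₁² + z₂²) + x_N z₁ + y_N z₂ ) and f_∞(u,v) := [ (z₂ − z₁)/(z₂ − z₁ − 1) ] · exp( (t/2)(z₁² + z₂²) + x z₁ + y z₂ ). Then there exists N₀ such that for all N ≥ N₀ the denominators appearing in f_N are nonvanishing for all (u,v)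 ∈ ℝ² and f_N is absolutely integrable on ℝ², and (2π)^{−2} ∬_{ℝ²} f_N(u,v) du dv → (2π)^{−2} ∬_{ℝ²} f_∞(u,v) du dv as N → ∞. -/
/-!
Dominated convergence. The Gaussian factor `exp ((t/2)(z₁² + z₂²))` decays like
`exp (-(t/4)(u² + v²))` along the contours, uniformly in `N`, so the only real point is a lower
bound for `denA` which is uniform in `(u, v)` and in small `ε`. The real part alone does not give
one, because it contains the unbounded term `ε² u v`.

Put `wᵢ = 1 + ε zᵢ` and `aᵢ = Re wᵢ = 1 + ε rᵢ`. Then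
`denA = z₂ - z₁ - w₁ w₂ = w₁ w₂ ((1/w₁ - 1/w₂)/ε - 1)`.
Inversion maps the line `Re w = a` into the circle with diameter `[0, 1/a]`, so `1/w₁` is on the
circle with diameter `[0, 1/a₁]` and `1/w₂ + ε` on the circle with diameter `[ε, ε + 1/a₂]`. Since
`1/a₁ - 1/a₂ = ε (r₂ - r₁)/(a₁ a₂)` and `r₂ - r₁ > 1`, the second circle lies strictly inside
the first one for small `ε`, at a distance of order `ε`. This is `norm_denA_ge`:
`‖denA‖ ≥ min (a₁ a₂) (r₂ - r₁ - a₁ a₂)`, whose right side tends to `min 1 (r₂ - r₁ - 1) > 0`.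
-/

open MeasureTheory Filter

/-- The point `r + i u` on the vertical contour through `r`. -/
noncomputable def zpt (r u : ℝ) : ℂ := (r : ℂ) + (u : ℂ) * Complex.I

/-- First denominator `(z₂ - z₁ - 1) - ε (z₁ + z₂) - ε² z₁ z₂` with
`z₁ = r₁ + i p.1`, `z₂ = r₂ + i p.2`. -/
noncomputable def denA (r₁ r₂ ε : ℝ) (p : ℝ × ℝ) : ℂ :=
  (zpt r₂ p.2 - zpt r₁ p.1 - 1) - (ε : ℂ) * (zpt r₁ p.1 + zpt r₂ p.2)
    - (ε : ℂ) ^ 2 * zpt r₁ p.1 * zpt r₂ p.2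

/-- Second denominator `(1 + ε z₁)(1 + ε z₂)`. -/
noncomputable def denB (r₁ r₂ ε : ℝ) (p : ℝ × ℝ) : ℂ :=
  (1 + (ε : ℂ) * zpt r₁ p.1) * (1 + (ε : ℂ) * zpt r₂ p.2)

/-- The contour integrand `f_N` (with `ε = N^{-1/4}`, so `ε² = N^{-1/2}`); taking `ε = 0`
recovers the limiting integrand `f_∞`. -/
noncomputable def contourF (r₁ r₂ tc xc yc ε : ℝ) (p : ℝ × ℝ) : ℂ :=
  ((zpt r₂ p.2 - zpt r₁ p.1) / denA r₁ r₂ ε p) * (1 / denB r₁ r₂ ε p) *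
    Complex.exp (((tc : ℂ) / 2) * ((zpt r₁ p.1) ^ 2 + (zpt r₂ p.2) ^ 2)
      + (xc : ℂ) * zpt r₁ p.1 + (yc : ℂ) * zpt r₂ p.2)

@[simp] lemma zpt_re (r u : ℝ) : (zpt r u).re = r := by simp [zpt]

@[simp] lemma zpt_im (r u : ℝ) : (zpt r u).im = u := by simp [zpt]

@[fun_prop] lemma continuous_zpt (r : ℝ) : Continuous (zpt r) := by
  unfold zpt; fun_prop

/-- Inversion maps the line `Re w = a` into the circle with diameter `[0, 1/a]`. -/
lemma norm_inv_sub_of_re_eq {w : ℂ} {a : ℝ} (ha : 0 < a) (hw : w.re = a) :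
    ‖w⁻¹ - ((1 / (2 * a) : ℝ) : ℂ)‖ = 1 / (2 * a) := by
  have hw0 : w ≠ 0 := by
    rintro rfl
    simp at hw
    linarith
  have ha0 : (a : ℂ) ≠ 0 := by exact_mod_cast ha.ne'
  have hc : (starRingEnd ℂ) w = 2 * a - w := by
    apply Complex.ext
    · simp [hw]; ring
    · simp
  have h : w⁻¹ - ((1 / (2 * a) : ℝ) : ℂ) = (starRingEnd ℂ) w / (2 * a * w) := by
    rw [hc]; push_cast; field_simp
  have hn : ‖w‖ ≠ 0 := norm_ne_zero_iff.mpr hw0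
  rw [h, norm_div, norm_mul, norm_mul, RCLike.norm_conj, Complex.norm_real, Real.norm_eq_abs,
    abs_of_pos ha]
  simp only [Complex.norm_ofNat]
  field_simp

lemma le_norm_one_add (r u ε : ℝ) : 1 + ε * r ≤ ‖1 + (ε : ℂ) * zpt r u‖ := by
  refine le_trans (le_of_eq ?_) (Complex.re_le_norm _)
  simp

/-- The nested-circles bound on the first denominator, uniform in `p`. -/
lemma norm_denA_ge {r₁ r₂ ε : ℝ} (hε : 0 < ε) (h1 : 0 < 1 + ε * r₁) (h2 : 0 < 1 + ε * r₂)
    (p : ℝ × ℝ) :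
    min ((1 + ε * r₁) * (1 + ε * r₂)) (r₂ - r₁ - (1 + ε * r₁) * (1 + ε * r₂))
      ≤ ‖denA r₁ r₂ ε p‖ := by
  set m := min ((1 + ε * r₁) * (1 + ε * r₂)) (r₂ - r₁ - (1 + ε * r₁) * (1 + ε * r₂)) with hm
  rcases le_or_gt m 0 with hm0 | hm0
  · exact hm0.trans (norm_nonneg _)
  set a := 1 + ε * r₁ with ha
  set b := 1 + ε * r₂ with hb
  set w₁ : ℂ := 1 + (ε : ℂ) * zpt r₁ p.1 with hw₁
  set w₂ : ℂ := 1 + (ε : ℂ) * zpt r₂ p.2 with hw₂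
  have n1 : a ≤ ‖w₁‖ := le_norm_one_add _ _ _
  have n2 : b ≤ ‖w₂‖ := le_norm_one_add _ _ _
  have hw₁0 : w₁ ≠ 0 := norm_pos_iff.mp (h1.trans_le n1)
  have hw₂0 : w₂ ≠ 0 := norm_pos_iff.mp (h2.trans_le n2)
  have c1 := norm_inv_sub_of_re_eq (w := w₁) h1 (by simp [hw₁, ha])
  have c2 := norm_inv_sub_of_re_eq (w := w₂) h2 (by simp [hw₂, hb])
  have key : (ε : ℂ) * denA r₁ r₂ ε p = w₁ * w₂ * (w₁⁻¹ - w₂⁻¹ - ε) := by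
    have : w₁ * w₂ * (w₁⁻¹ - w₂⁻¹ - ε) = w₂ - w₁ - ε * (w₁ * w₂) := by field_simp
    rw [this, hw₁, hw₂, denA]; ring
  have hab : 0 < a * b := mul_pos h1 h2
  -- the distance between the two circles
  have hdist : ε * m / (a * b) ≤ ‖w₁⁻¹ - w₂⁻¹ - ε‖ := by
    have tri : 1 / (2 * a) ≤ ‖w₁⁻¹ - w₂⁻¹ - ε‖ + 1 / (2 * b)
        + |1 / (2 * b) + ε - 1 / (2 * a)| := by
      rw [← c2, ← Real.norm_eq_abs, ← Complex.norm_real]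
      conv_lhs => rw [← c1]
      refine le_trans (le_of_eq ?_) (norm_add₃_le)
      rw [c2]
      congr 1
      push_cast
      ring
    have e1 : 1 / (2 * a) - 1 / (2 * b) = ε * (r₂ - r₁) / (a * b) / 2 := by
      field_simp
      rw [ha, hb]; ring
    have e2 : ε * m / (a * b) ≤ ε := by
      rw [div_le_iff₀ hab]
      exact mul_le_mul_of_nonneg_left (min_le_left _ _) hε.le
    have e3 : ε * m / (a * b) ≤ ε * (r₂ - r₁) / (a * b) - ε := by
      have : ε * (r₂ - r₁) / (a * b) - ε = ε * (r₂ - r₁ - a * b) / (a * b) := by field_simp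
      rw [this]
      gcongr
      exact min_le_right _ _
    rcases abs_cases (1 / (2 * b) + ε - 1 / (2 * a)) with ⟨h, _⟩ | ⟨h, _⟩ <;> rw [h] at tri <;>
      linarith
  have hfin : ε * m ≤ ε * ‖denA r₁ r₂ ε p‖ := by
    calc ε * m = (a * b) * (ε * m / (a * b)) := by field_simp
      _ ≤ (‖w₁‖ * ‖w₂‖) * ‖w₁⁻¹ - w₂⁻¹ - ε‖ := by gcongr
      _ = ‖(ε : ℂ) * denA r₁ r₂ ε p‖ := by rw [key, norm_mul, norm_mul]
      _ = ε * ‖denA r₁ r₂ ε p‖ := by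
        rw [norm_mul, Complex.norm_real, Real.norm_eq_abs, abs_of_pos hε]
  exact le_of_mul_le_mul_left hfin hε

lemma norm_denB_ge {r₁ r₂ ε : ℝ} (h2 : 0 < 1 + ε * r₂) (p : ℝ × ℝ) :
    (1 + ε * r₁) * (1 + ε * r₂) ≤ ‖denB r₁ r₂ ε p‖ := by
  rw [denB, norm_mul]
  exact mul_le_mul (le_norm_one_add _ _ _) (le_norm_one_add _ _ _) h2.le (norm_nonneg _)

lemma norm_exp_contour (r₁ r₂ tc xc yc : ℝ) (p : ℝ × ℝ) :
    ‖Complex.exp (((tc : ℂ) / 2) * ((zpt r₁ p.1) ^ 2 + (zpt r₂ p.2) ^ 2)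
      + (xc : ℂ) * zpt r₁ p.1 + (yc : ℂ) * zpt r₂ p.2)‖
      = Real.exp (tc / 2 * (r₁ ^ 2 + r₂ ^ 2) + xc * r₁ + yc * r₂
          - tc / 2 * (p.1 ^ 2 + p.2 ^ 2)) := by
  rw [Complex.norm_exp]
  congr 1
  have h : (tc : ℂ) / 2 = ((tc / 2 : ℝ) : ℂ) := by push_cast; rfl
  rw [h]
  simp only [Complex.add_re, Complex.re_ofReal_mul]
  simp only [pow_two, Complex.mul_re, zpt_re, zpt_im]
  ring

lemma norm_zpt_sub_le (r₁ r₂ u v : ℝ) :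
    ‖zpt r₂ v - zpt r₁ u‖ ≤ (1 + |r₂ - r₁|) * ((1 + |u|) * (1 + |v|)) := by
  have h := Complex.norm_le_abs_re_add_abs_im (zpt r₂ v - zpt r₁ u)
  simp only [Complex.sub_re, Complex.sub_im, zpt_re, zpt_im] at h
  have h3 : |v - u| ≤ |v| + |u| := abs_sub v u
  have h4 := abs_nonneg (r₂ - r₁)
  have h5 := mul_nonneg (abs_nonneg u) (abs_nonneg v)
  have h6 : 0 ≤ |r₂ - r₁| * (|u| + |v| + |u| * |v|) := by positivity
  nlinarith

/-- The one-variable factor of the dominating function. -/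
noncomputable def gaussDom (b u : ℝ) : ℝ := (1 + |u|) * Real.exp (-b * u ^ 2)

lemma integrable_gaussDom {b : ℝ} (hb : 0 < b) : Integrable (gaussDom b) := by
  have h1 := integrable_exp_neg_mul_sq hb
  have h2 := (integrable_mul_exp_neg_mul_sq hb).norm
  refine (h1.add h2).congr (Eventually.of_forall fun u => ?_)
  simp only [Pi.add_apply, gaussDom, norm_mul, Real.norm_eq_abs, Real.abs_exp]
  ring

lemma norm_contourF_le {r₁ r₂ tc xc yc ε δ b K : ℝ} {p : ℝ × ℝ} (hδ : 0 < δ)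
    (hA : δ ≤ ‖denA r₁ r₂ ε p‖) (hB : 1 / 2 ≤ ‖denB r₁ r₂ ε p‖) (hb : b ≤ tc / 2)
    (hK : tc / 2 * (r₁ ^ 2 + r₂ ^ 2) + xc * r₁ + yc * r₂ ≤ K) :
    ‖contourF r₁ r₂ tc xc yc ε p‖ ≤
      ((1 + |r₂ - r₁|) / δ * 2 * Real.exp K) * (gaussDom b p.1 * gaussDom b p.2) := by
  rw [contourF, norm_mul, norm_mul, norm_div, norm_div, norm_exp_contour, norm_one]
  have hE : Real.exp (tc / 2 * (r₁ ^ 2 + r₂ ^ 2) + xc * r₁ + yc * r₂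
          - tc / 2 * (p.1 ^ 2 + p.2 ^ 2))
      ≤ Real.exp K * (Real.exp (-b * p.1 ^ 2) * Real.exp (-b * p.2 ^ 2)) := by
    rw [← Real.exp_add, ← Real.exp_add, Real.exp_le_exp]
    nlinarith [mul_le_mul_of_nonneg_right hb (add_nonneg (sq_nonneg p.1) (sq_nonneg p.2))]
  have hB' : 1 / ‖denB r₁ r₂ ε p‖ ≤ 2 := by
    rw [div_le_iff₀ (by linarith)]; linarith
  calc _ ≤ ((1 + |r₂ - r₁|) * ((1 + |p.1|) * (1 + |p.2|)) / δ) * 2 *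
        (Real.exp K * (Real.exp (-b * p.1 ^ 2) * Real.exp (-b * p.2 ^ 2))) := by
        gcongr
        exact norm_zpt_sub_le _ _ _ _
    _ = _ := by simp only [gaussDom]; ring

lemma measurable_contourF (r₁ r₂ tc xc yc ε : ℝ) : Measurable (contourF r₁ r₂ tc xc yc ε) := by
  have h1 : Measurable fun p : ℝ × ℝ => zpt r₁ p.1 :=
    ((continuous_zpt r₁).comp continuous_fst).measurable
  have h2 : Measurable fun p : ℝ × ℝ => zpt r₂ p.2 :=
    ((continuous_zpt r₂).comp continuous_snd).measurable
  unfold contourF denA denB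
  fun_prop

lemma denA_zero_ne {r₁ r₂ : ℝ} (hr : r₁ + 1 < r₂) (p : ℝ × ℝ) : denA r₁ r₂ 0 p ≠ 0 := by
  intro h
  have := congrArg Complex.re h
  simp [denA] at this
  linarith

lemma tendsto_contourF {r₁ r₂ : ℝ} (hr : r₁ + 1 < r₂) {tN xN yN e : ℕ → ℝ} {t x y : ℝ}
    (htN : Tendsto tN atTop (nhds t)) (hxN : Tendsto xN atTop (nhds x))
    (hyN : Tendsto yN atTop (nhds y)) (he : Tendsto e atTop (nhds 0)) (p : ℝ × ℝ) :
    Tendsto (fun N => contourF r₁ r₂ (tN N) (xN N) (yN N) (e N) p) atTop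
      (nhds (contourF r₁ r₂ t x y 0 p)) := by
  have hA : Tendsto (fun N => denA r₁ r₂ (e N) p) atTop (nhds (denA r₁ r₂ 0 p)) := by
    have : Continuous fun ε => denA r₁ r₂ ε p := by unfold denA; fun_prop
    exact (this.tendsto 0).comp he
  have hB : Tendsto (fun N => denB r₁ r₂ (e N) p) atTop (nhds (denB r₁ r₂ 0 p)) := by
    have : Continuous fun ε => denB r₁ r₂ ε p := by unfold denB; fun_prop
    exact (this.tendsto 0).comp he
  have ht' := (Complex.continuous_ofReal.tendsto t).comp htN
  have hx' := (Complex.continuous_ofReal.tendsto x).comp hxN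
  have hy' := (Complex.continuous_ofReal.tendsto y).comp hyN
  unfold contourF
  refine ((tendsto_const_nhds.div hA (denA_zero_ne hr p)).mul
    (tendsto_const_nhds.div hB (by simp [denB]))).mul ?_
  exact (Complex.continuous_exp.tendsto _).comp
    ((((ht'.div_const 2).mul_const _).add (hx'.mul_const _)).add (hy'.mul_const _))

/-- Convergence of the two-point contour integrals: for `r₂ > r₁ + 1` and
`(t_N, x_N, y_N) → (t, x, y)` with `t > 0`, eventually the denominators are nonvanishing and
`f_N` is integrable, and `(2π)^{-2} ∬ f_N → (2π)^{-2} ∬ f_∞`. -/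
theorem stmt10 (r₁ r₂ : ℝ) (hr : r₁ + 1 < r₂) (tN xN yN : ℕ → ℝ) (t x y : ℝ) (ht : 0 < t)
    (htN : Tendsto tN atTop (nhds t)) (hxN : Tendsto xN atTop (nhds x))
    (hyN : Tendsto yN atTop (nhds y)) :
    ∃ N₀ : ℕ,
      (∀ N : ℕ, N₀ ≤ N →
        (∀ p : ℝ × ℝ, denA r₁ r₂ ((N : ℝ) ^ (-(1/4 : ℝ))) p ≠ 0 ∧
            denB r₁ r₂ ((N : ℝ) ^ (-(1/4 : ℝ))) p ≠ 0) ∧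
        Integrable (contourF r₁ r₂ (tN N) (xN N) (yN N) ((N : ℝ) ^ (-(1/4 : ℝ))))
          (volume : Measure (ℝ × ℝ))) ∧
      Tendsto
        (fun N : ℕ => ((2 * Real.pi) ^ 2)⁻¹ •
          ∫ p : ℝ × ℝ, contourF r₁ r₂ (tN N) (xN N) (yN N) ((N : ℝ) ^ (-(1/4 : ℝ))) p)
        atTop
        (nhds (((2 * Real.pi) ^ 2)⁻¹ • ∫ p : ℝ × ℝ, contourF r₁ r₂ t x y 0 p)) := by
  set e : ℕ → ℝ := fun N => (N : ℝ) ^ (-(1/4 : ℝ)) with he_def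
  have he : Tendsto e atTop (nhds 0) :=
    (tendsto_rpow_neg_atTop (by norm_num : (0 : ℝ) < 1 / 4)).comp tendsto_natCast_atTop_atTop
  set δ : ℝ := min 1 (r₂ - r₁ - 1) / 2 with hδ_def
  have hm : 0 < min 1 (r₂ - r₁ - 1) := lt_min one_pos (by linarith)
  have hδ : 0 < δ := half_pos hm
  set K : ℝ := t / 2 * (r₁ ^ 2 + r₂ ^ 2) + x * r₁ + y * r₂ + 1 with hK_def
  have l1 : Tendsto (fun N => 1 + e N * r₁) atTop (nhds 1) := by
    simpa using (he.mul_const r₁).const_add 1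
  have l2 : Tendsto (fun N => 1 + e N * r₂) atTop (nhds 1) := by
    simpa using (he.mul_const r₂).const_add 1
  have l12 : Tendsto (fun N => (1 + e N * r₁) * (1 + e N * r₂)) atTop (nhds 1) := by
    simpa using l1.mul l2
  have lm : Tendsto (fun N => min ((1 + e N * r₁) * (1 + e N * r₂))
      (r₂ - r₁ - (1 + e N * r₁) * (1 + e N * r₂))) atTop (nhds (min 1 (r₂ - r₁ - 1))) :=
    l12.min (l12.const_sub _)
  have lK : Tendsto (fun N => tN N / 2 * (r₁ ^ 2 + r₂ ^ 2) + xN N * r₁ + yN N * r₂) atTop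
      (nhds (t / 2 * (r₁ ^ 2 + r₂ ^ 2) + x * r₁ + y * r₂)) :=
    (((htN.div_const 2).mul_const _).add (hxN.mul_const _)).add (hyN.mul_const _)
  have hev : ∀ᶠ N in atTop, (∀ p, δ ≤ ‖denA r₁ r₂ (e N) p‖ ∧ 1 / 2 ≤ ‖denB r₁ r₂ (e N) p‖) ∧
      ∀ p, ‖contourF r₁ r₂ (tN N) (xN N) (yN N) (e N) p‖ ≤
        ((1 + |r₂ - r₁|) / δ * 2 * Real.exp K) *
          (gaussDom (t / 4) p.1 * gaussDom (t / 4) p.2) := by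
    filter_upwards [eventually_gt_atTop 0, l1.eventually_const_lt one_pos,
      l2.eventually_const_lt one_pos,
      l12.eventually_const_lt (by norm_num : (1 / 2 : ℝ) < 1),
      lm.eventually_const_lt (half_lt_self hm),
      htN.eventually_const_lt (half_lt_self ht),
      lK.eventually_lt_const (lt_add_one _)] with N hN g1 g2 g12 gm gt gK
    have heN : 0 < e N := Real.rpow_pos_of_pos (by exact_mod_cast hN) _
    have hAB : ∀ p, δ ≤ ‖denA r₁ r₂ (e N) p‖ ∧ 1 / 2 ≤ ‖denB r₁ r₂ (e N) p‖ := fun p =>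
      ⟨gm.le.trans (norm_denA_ge heN g1 g2 p), g12.le.trans (norm_denB_ge g2 p)⟩
    exact ⟨hAB, fun p => norm_contourF_le hδ (hAB p).1 (hAB p).2 (by linarith) gK.le⟩
  have hint : Integrable (fun p : ℝ × ℝ => ((1 + |r₂ - r₁|) / δ * 2 * Real.exp K) *
      (gaussDom (t / 4) p.1 * gaussDom (t / 4) p.2)) (volume : Measure (ℝ × ℝ)) :=
    ((integrable_gaussDom (by linarith)).mul_prod
      (integrable_gaussDom (by linarith))).const_mul _
  have hmeas : ∀ N, AEStronglyMeasurable (contourF r₁ r₂ (tN N) (xN N) (yN N) (e N))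
      (volume : Measure (ℝ × ℝ)) := fun N => (measurable_contourF _ _ _ _ _ _).aestronglyMeasurable
  obtain ⟨N₀, hN₀⟩ := eventually_atTop.mp hev
  refine ⟨N₀, fun N hN => ⟨fun p => ⟨?_, ?_⟩, ?_⟩, ?_⟩
  · exact norm_pos_iff.mp (hδ.trans_le ((hN₀ N hN).1 p).1)
  · exact norm_pos_iff.mp (one_half_pos.trans_le ((hN₀ N hN).1 p).2)
  · exact hint.mono' (hmeas N) (Eventually.of_forall (hN₀ N hN).2)
  · refine Tendsto.const_smul ?_ _
    exact tendsto_integral_filter_of_dominated_convergence _ (Eventually.of_forall hmeas)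
      (hev.mono fun N h => Eventually.of_forall h.2) hint
      (Eventually.of_forall fun p => tendsto_contourF hr htN hxN hyN he p)
end
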